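/- Suppose the degree n of the Blaschke product B is a prime number, and let g ∈ H^∞. If Γ(g) vanishes identically on 𝔻, then g is a function of B, i.e. there exists a bounded holomorphic function g_1 on 𝔻 with g = g_1 ∘ B; equivalently, if g is not of the form g_1 ∘ B for any bounded holomorphic g_1, then Γ(g) is not identically zero. -/

import Mathlib

/-!
For `z` in the disk let `N z` be the number of points `w`, counted with multiplicity, in the fiber
of `B` through `z` with `g w = g z`, and let `χ_z` be the monic polynomial whose roots are the
values of `g` on that fiber, so that `N z` is the multiplicity of the root `g z` of `χ_z`. The
coefficients of `χ_z` are holomorphic in `z`: by Newton's identities it suffices to treat the sums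
of `g ^ k` over the fiber over `b = B z`, and these are given by a logarithmic residue integral,
holomorphic in `b`.

Let `m` be the minimum of `N`. By the identity theorem, applied to the `m`-th derivative of `χ_z`
at `g z`, the set of `z` with `N z > m` is countable, so some fiber avoids it. On that fiber every
value of `g` is taken exactly `m` times, hence `m` divides `n`. If `Γ(g) = 0` then every `N z` is
at least `2`; as `n` is prime, `m = n`, so `g` is constant on all fibers and is the average of its
own values over the fiber, a holomorphic function of `B z`. It is bounded because `B` is onto the
disk.
-/

open Complex Polynomial MeasureTheory Metric Set Filter Topology
open scoped Classical

noncomputable section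

/-- The open unit disk in `ℂ`. -/
def uDisk : Set ℂ := Metric.ball 0 1

/-- The closed unit disk in `ℂ`. -/
def cDisk : Set ℂ := Metric.closedBall 0 1

/-- The finite Blaschke product with zero set `a 0, …, a (n-1)`:
`B(z) = ∏_j (a_j - z)/(1 - conj(a_j)·z)`. -/
def blaschke {n : ℕ} (a : Fin n → ℂ) (z : ℂ) : ℂ :=
  ∏ j, (a j - z) / (1 - (starRingEnd ℂ) (a j) * z)

/-- The multiset of the `n` solutions (with multiplicity) `φ_0(z) = z, φ_1(z), …, φ_{n-1}(z)`
of `B(w) = B(z)`, realized as the roots of the polynomial equation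
`∏_j (a_j - w) = B(z) · ∏_j (1 - conj(a_j)·w)`. -/
def fiberMS {n : ℕ} (a : Fin n → ℂ) (z : ℂ) : Multiset ℂ :=
  ((∏ j, (Polynomial.C (a j) - Polynomial.X)) -
    Polynomial.C (blaschke a z) *
      ∏ j, (1 - Polynomial.C ((starRingEnd ℂ) (a j)) * Polynomial.X)).roots

/-- `𝒟(f)(z) = ∏_{j=1}^{n-1} (f(z) - f(φ_j(z)))`, where `φ_1(z), …, φ_{n-1}(z)` is the
fiber of `B` over `B(z)` with one copy of `z` removed.  In particular
`calD a id z = ∏_{j=1}^{n-1} (z - φ_j(z))`. -/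
def calD {n : ℕ} (a : Fin n → ℂ) (f : ℂ → ℂ) (z : ℂ) : ℂ :=
  (((fiberMS a z).erase z).map (fun w => f z - f w)).prod

/-- `G` is (the holomorphic extension after removing singularities of) `Γ(f) = 𝒟(f)/𝒟`. -/
def IsGamma {n : ℕ} (a : Fin n → ℂ) (f G : ℂ → ℂ) : Prop :=
  DifferentiableOn ℂ G uDisk ∧ ∀ z ∈ uDisk, G z * calD a id z = calD a f z

/-- `p`-th power integral mean of `f` on the circle of radius `r`. -/
def circMean (p : ℝ) (f : ℂ → ℂ) (r : ℝ) : ℝ :=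
  ∫ θ in (0:ℝ)..(2 * Real.pi), ‖f ((r : ℂ) * Complex.exp ((θ : ℂ) * Complex.I))‖ ^ p

/-- The `H^p` norm of `f` (for `0 < p < ∞`). -/
def hpNorm (p : ℝ) (f : ℂ → ℂ) : ℝ :=
  (sSup {m : ℝ | ∃ r ∈ Set.Ico (0:ℝ) 1, m = circMean p f r}) ^ (1 / p)

/-- Membership in the Hardy space `H^p`, `0 < p < ∞`: holomorphic on the disk with
uniformly bounded integral means. -/
def MemHp (p : ℝ) (f : ℂ → ℂ) : Prop :=
  DifferentiableOn ℂ f uDisk ∧ ∃ C : ℝ, ∀ r ∈ Set.Ico (0:ℝ) 1, circMean p f r ≤ C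

/-- Membership in `H^∞`: bounded holomorphic functions on the disk. -/
def MemHinf (f : ℂ → ℂ) : Prop :=
  DifferentiableOn ℂ f uDisk ∧ ∃ C : ℝ, ∀ z ∈ uDisk, ‖f z‖ ≤ C

/-- The `H^∞` (sup) norm. -/
def hinfNorm (f : ℂ → ℂ) : ℝ := sSup {m : ℝ | ∃ z ∈ uDisk, m = ‖f z‖}

/-- The algebra of all polynomials in the functions `F 0, …, F (m-1)`. -/
def algGen (m : ℕ) (F : Fin m → (ℂ → ℂ)) : Set (ℂ → ℂ) :=
  {h | ∃ P : MvPolynomial (Fin m) ℂ, ∀ z : ℂ, h z = MvPolynomial.eval (fun i => F i z) P}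

/-- The algebra `ℂ[F,G]` of all polynomials in the two functions `F` and `G`. -/
def algGen2 (F G : ℂ → ℂ) : Set (ℂ → ℂ) := algGen 2 ![F, G]

/-- The (sequential) closure of `S` in `H^p`. -/
def hpClosure (p : ℝ) (S : Set (ℂ → ℂ)) : Set (ℂ → ℂ) :=
  {f | MemHp p f ∧ ∃ u : ℕ → (ℂ → ℂ), (∀ k, u k ∈ S) ∧
    Filter.Tendsto (fun k => hpNorm p (fun z => f z - u k z)) Filter.atTop (nhds 0)}

/-- `S` has finite codimension in `H^p`: finitely many functions in `H^p` together with `S`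
span all of `H^p`. -/
def FiniteCodimHp (p : ℝ) (S : Set (ℂ → ℂ)) : Prop :=
  ∃ (k : ℕ) (e : Fin k → (ℂ → ℂ)), (∀ i, MemHp p (e i)) ∧
    ∀ f, MemHp p f → ∃ (c : Fin k → ℂ) (s : ℂ → ℂ), s ∈ S ∧
      ∀ z ∈ uDisk, f z = s z + ∑ i, c i * e i z

/-- Inner function: bounded by 1, holomorphic, radial limits of modulus 1 a.e. -/
def IsInner (f : ℂ → ℂ) : Prop :=
  DifferentiableOn ℂ f uDisk ∧ (∀ z ∈ uDisk, ‖f z‖ ≤ 1) ∧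
  ∀ᵐ θ : ℝ ∂volume, ∃ l : ℂ, ‖l‖ = 1 ∧
    Filter.Tendsto (fun r : ℝ => f ((r : ℂ) * Complex.exp ((θ : ℂ) * Complex.I)))
      (nhdsWithin 1 (Set.Iio 1)) (nhds l)

/-- `J` divides `h`, with a quotient holomorphic on the disk. -/
def InnerDivides (J h : ℂ → ℂ) : Prop :=
  ∃ k : ℂ → ℂ, DifferentiableOn ℂ k uDisk ∧ ∀ z ∈ uDisk, h z = J z * k z

/-- Outer function: a holomorphic function on the disk whose only inner divisors are
unimodular constants (i.e. whose inner part is a unimodular constant). -/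
def IsOuter (h : ℂ → ℂ) : Prop :=
  DifferentiableOn ℂ h uDisk ∧
  ∀ J : ℂ → ℂ, IsInner J → InnerDivides J h →
    ∃ c : ℂ, ‖c‖ = 1 ∧ ∀ z ∈ uDisk, J z = c

/-- `I` is the inner part of `h`: `I` is inner and `h = I·F` with `F` outer. -/
def IsInnerPartOf (I h : ℂ → ℂ) : Prop :=
  IsInner I ∧ ∃ F : ℂ → ℂ, IsOuter F ∧ ∀ z ∈ uDisk, h z = I z * F z

/-- Finite Blaschke product (up to a unimodular constant factor). -/
def IsFiniteBlaschke (f : ℂ → ℂ) : Prop :=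
  ∃ (m : ℕ) (c : ℂ) (b : Fin m → ℂ), ‖c‖ = 1 ∧ (∀ i, b i ∈ uDisk) ∧
    ∀ z ∈ uDisk, f z = c * ∏ i, (b i - z) / (1 - (starRingEnd ℂ) (b i) * z)

/-- `h` has no singular inner factor: every zero-free inner divisor of `h` is a
unimodular constant. -/
def NoSingularInnerFactor (h : ℂ → ℂ) : Prop :=
  ∀ J : ℂ → ℂ, IsInner J → (∀ z ∈ uDisk, J z ≠ 0) → InnerDivides J h →
    ∃ c : ℂ, ‖c‖ = 1 ∧ ∀ z ∈ uDisk, J z = c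

/-! ### Symmetric functions of holomorphically varying multisets -/

theorem mul_multiset_esymm_eq_sum {R : Type*} [CommRing R] (s : Multiset R) (k : ℕ) :
    k * s.esymm k = (-1) ^ (k + 1) * ∑ i ∈ Finset.HasAntidiagonal.antidiagonal k with i.1 < k,
      (-1) ^ i.1 * s.esymm i.1 * (s.map (· ^ i.2)).sum := by
  have esymm_eq (j : ℕ) :
      MvPolynomial.aeval (fun x : s ↦ (x : R)) (MvPolynomial.esymm s ℤ j) = s.esymm j := by
    rw [MvPolynomial.aeval_esymm_eq_multiset_esymm, Multiset.map_univ_coe]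
  have psum_eq (j : ℕ) :
      MvPolynomial.aeval (fun x : s ↦ (x : R)) (MvPolynomial.psum s ℤ j) =
        (s.map (· ^ j)).sum := by
    simp only [MvPolynomial.psum, map_sum, map_pow, MvPolynomial.aeval_X]
    exact congrArg Multiset.sum (Multiset.map_univ s (· ^ j))
  simpa only [map_mul, map_pow, map_neg, map_one, map_sum, map_natCast, esymm_eq, psum_eq] using
    congrArg (MvPolynomial.aeval fun x : s ↦ (x : R)) (MvPolynomial.mul_esymm_eq_sum s ℤ k)

theorem dvd_card_of_forall_count_eq {α : Type*} [DecidableEq α] {s : Multiset α} {m : ℕ}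
    (h : ∀ x ∈ s, s.count x = m) : m ∣ s.card := by
  rw [← Multiset.toFinset_sum_count_eq]
  exact Finset.dvd_sum fun x hx ↦ (h x (Multiset.mem_toFinset.1 hx)).symm.dvd

section Symmetric

variable {𝕜 E : Type*} [NontriviallyNormedField 𝕜] [NormedAddCommGroup E] [NormedSpace 𝕜 E]
  {U : Set E}

theorem differentiableOn_esymm [CharZero 𝕜] {s : E → Multiset 𝕜}
    (hs : ∀ k, DifferentiableOn 𝕜 (fun x ↦ ((s x).map (· ^ k)).sum) U) (k : ℕ) :
    DifferentiableOn 𝕜 (fun x ↦ (s x).esymm k) U := by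
  induction k using Nat.strong_induction_on with
  | _ k ih =>
    rcases eq_or_ne k 0 with rfl | hk
    · simp only [Multiset.esymm, Multiset.powersetCard_zero_left, Multiset.map_singleton,
        Multiset.prod_zero, Multiset.sum_singleton, differentiableOn_const]
    have newton (x : E) : (s x).esymm k =
        (k : 𝕜)⁻¹ * ((-1) ^ (k + 1) * ∑ i ∈ Finset.HasAntidiagonal.antidiagonal k with i.1 < k,
          (-1) ^ i.1 * (s x).esymm i.1 * ((s x).map (· ^ i.2)).sum) := by
      rw [← mul_multiset_esymm_eq_sum, inv_mul_cancel_left₀ (Nat.cast_ne_zero.2 hk)]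
    simp only [newton]
    refine ((DifferentiableOn.fun_sum fun i hi ↦ ?_).const_mul _).const_mul _
    exact ((ih i.1 (Finset.mem_filter.1 hi).2).const_mul _).mul (hs i.2)

theorem differentiableOn_coeff_prod_X_sub_C [CharZero 𝕜] {s : E → Multiset 𝕜} {n : ℕ}
    (hcard : ∀ x ∈ U, (s x).card = n)
    (hs : ∀ k, DifferentiableOn 𝕜 (fun x ↦ ((s x).map (· ^ k)).sum) U) (k : ℕ) :
    DifferentiableOn 𝕜 (fun x ↦ ((s x).map (X - C ·)).prod.coeff k) U := by
  rcases le_or_gt k n with hk | hk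
  · refine ((differentiableOn_esymm hs (n - k)).const_mul ((-1) ^ (n - k))).congr fun x hx ↦ ?_
    rw [Multiset.prod_X_sub_C_coeff _ (hk.trans_eq (hcard x hx).symm), hcard x hx]
  · refine (differentiableOn_const 0).congr fun x hx ↦ coeff_eq_zero_of_natDegree_lt ?_
    rwa [natDegree_multiset_prod_X_sub_C_eq_card, hcard x hx]

theorem differentiableOn_eval_of_coeff {p : E → 𝕜[X]} {g : E → 𝕜} {n : ℕ}
    (hdeg : ∀ x ∈ U, (p x).natDegree ≤ n)
    (hp : ∀ k, DifferentiableOn 𝕜 (fun x ↦ (p x).coeff k) U) (hg : DifferentiableOn 𝕜 g U) :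
    DifferentiableOn 𝕜 (fun x ↦ (p x).eval (g x)) U :=
  (DifferentiableOn.fun_sum fun k _ ↦ (hp k).mul (hg.pow k)).congr fun x hx ↦
    eval_eq_sum_range' (Nat.lt_succ_of_le (hdeg x hx)) (g x)

end Symmetric

/-! ### Sums over the roots of a pencil of polynomials -/

theorem circleIntegral_mul_sum_one_div_sub {f : ℂ → ℂ} {c : ℂ} {r : ℝ} (hr : 0 ≤ r)
    (hf : DifferentiableOn ℂ f (closedBall c r)) (s : Multiset ℂ) (hs : ∀ z ∈ s, z ∈ ball c r) :
    ∮ w in C(c, r), f w * (s.map fun z ↦ 1 / (w - z)).sum = 2 * Real.pi * I * (s.map f).sum := by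
  have hf_sphere : ContinuousOn f (sphere c r) := hf.continuousOn.mono sphere_subset_closedBall
  have kernel_cont {z : ℂ} (hz : z ∈ ball c r) :
      ContinuousOn (fun w ↦ 1 / (w - z)) (sphere c r) :=
    continuousOn_const.div (by fun_prop) fun w hw ↦
      sub_ne_zero.2 fun h ↦ (sphere_disjoint_ball.le_bot ⟨hw, h ▸ hz⟩).elim
  have cauchy {z : ℂ} (hz : z ∈ ball c r) :
      ∮ w in C(c, r), f w * (1 / (w - z)) = 2 * Real.pi * I * f z := by
    simpa only [smul_eq_mul, one_div, mul_comm (f _)] using hf.circleIntegral_sub_inv_smul hz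
  induction s using Multiset.induction_on with
  | empty => simp [circleIntegral]
  | cons z s ih =>
    have hz : z ∈ ball c r := hs z (Multiset.mem_cons_self z s)
    have hs' : ∀ y ∈ s, y ∈ ball c r := fun y hy ↦ hs y (Multiset.mem_cons_of_mem hy)
    have sum_cont : ContinuousOn (fun w ↦ (s.map fun y ↦ 1 / (w - y)).sum) (sphere c r) :=
      continuousOn_multiset_sum s fun y hy ↦ kernel_cont (hs' y hy)
    simp only [Multiset.map_cons, Multiset.sum_cons, mul_add]
    rw [circleIntegral.integral_add
      ((hf_sphere.fun_mul (kernel_cont hz)).circleIntegrable hr)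
      ((hf_sphere.fun_mul sum_cont).circleIntegrable hr), cauchy hz, ih hs']

theorem sum_map_roots_eq_circleIntegral {f : ℂ → ℂ} {c : ℂ} {r : ℝ} (hr : 0 ≤ r)
    (hf : DifferentiableOn ℂ f (closedBall c r)) {P : ℂ[X]} (hP : ∀ w ∉ ball c r, P.eval w ≠ 0) :
    (P.roots.map f).sum =
      (2 * Real.pi * I)⁻¹ * ∮ w in C(c, r), f w * (P.derivative.eval w / P.eval w) := by
  have log_deriv : ∮ w in C(c, r), f w * (P.derivative.eval w / P.eval w) =
      ∮ w in C(c, r), f w * (P.roots.map fun z ↦ 1 / (w - z)).sum := by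
    refine circleIntegral.integral_congr hr fun w hw ↦ ?_
    have hw' : w ∉ ball c r := fun h ↦ sphere_disjoint_ball.le_bot ⟨hw, h⟩
    simp only [(IsAlgClosed.splits P).eval_derivative_div_eval_of_ne_zero (hP w hw')]
  rw [log_deriv, circleIntegral_mul_sum_one_div_sub hr hf P.roots
    fun z hz ↦ by_contra fun h ↦ hP z h (isRoot_of_mem_roots hz),
    inv_mul_cancel_left₀ two_pi_I_ne_zero]

theorem hasDerivAt_circleIntegral {E : Type*} [NormedAddCommGroup E] [NormedSpace ℂ E]
    {f f' : ℂ → ℂ → E} {U : Set ℂ} {c b₀ : ℂ} {r : ℝ} (hr : 0 ≤ r) (hU : IsOpen U) (hb₀ : b₀ ∈ U)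
    (hf : ContinuousOn (Function.uncurry f) (U ×ˢ sphere c r))
    (hf' : ContinuousOn (Function.uncurry f') (U ×ˢ sphere c r))
    (hd : ∀ b ∈ U, ∀ w ∈ sphere c r, HasDerivAt (f · w) (f' b w) b) :
    HasDerivAt (fun b ↦ ∮ w in C(c, r), f b w) (∮ w in C(c, r), f' b₀ w) b₀ := by
  obtain ⟨K, hK, hb₀K, hKU⟩ := exists_compact_subset hU hb₀
  have hcircle (θ : ℝ) : circleMap c r θ ∈ sphere c r := circleMap_mem_sphere c hr θ
  have slice_cont {k : ℂ → ℂ → E} (hk : ContinuousOn (Function.uncurry k) (U ×ˢ sphere c r))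
      {b : ℂ} (hb : b ∈ U) :
      Continuous fun θ ↦ deriv (circleMap c r) θ • k b (circleMap c r θ) := by
    have hk_circle : Continuous fun θ ↦ k b (circleMap c r θ) :=
      hk.comp_continuous (f := fun θ ↦ (b, circleMap c r θ)) (by fun_prop) fun θ ↦ ⟨hb, hcircle θ⟩
    have hcircle' : Continuous (deriv (circleMap c r)) :=
      (contDiff_circleMap c r).continuous_deriv le_top
    exact hcircle'.smul hk_circle
  obtain ⟨M, hM⟩ := (hK.prod (isCompact_sphere c r)).exists_bound_of_continuousOn
    (hf'.mono (prod_mono_left hKU))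
  refine (intervalIntegral.hasDerivAt_integral_of_dominated_loc_of_deriv_le
    (F := fun b θ ↦ deriv (circleMap c r) θ • f b (circleMap c r θ))
    (F' := fun b θ ↦ deriv (circleMap c r) θ • f' b (circleMap c r θ))
    (bound := fun _ ↦ r * M) (mem_interior_iff_mem_nhds.1 hb₀K) ?_
    ((slice_cont hf hb₀).intervalIntegrable _ _) (slice_cont hf' hb₀).aestronglyMeasurable ?_
    intervalIntegrable_const ?_).2
  · filter_upwards [hU.mem_nhds hb₀] with b hb
    exact (slice_cont hf hb).aestronglyMeasurable
  · refine .of_forall fun θ _ b hb ↦ ?_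
    calc ‖deriv (circleMap c r) θ • f' b (circleMap c r θ)‖
        = r * ‖f' b (circleMap c r θ)‖ := by simp [norm_smul, abs_of_nonneg hr]
      _ ≤ r * M := mul_le_mul_of_nonneg_left (hM (b, circleMap c r θ) ⟨hb, hcircle θ⟩) hr
  · exact .of_forall fun θ _ b hb ↦ (hd b (hKU hb) _ (hcircle θ)).const_smul _

theorem differentiableOn_sum_map_roots_pencil {A Q : ℂ[X]} {f : ℂ → ℂ} {U : Set ℂ} {c : ℂ} {r : ℝ}
    (hr : 0 ≤ r) (hU : IsOpen U) (hf : DifferentiableOn ℂ f (closedBall c r))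
    (hne : ∀ b ∈ U, ∀ w ∉ ball c r, (A - C b * Q).eval w ≠ 0) :
    DifferentiableOn ℂ (fun b ↦ ((A - C b * Q).roots.map f).sum) U := by
  set P : ℂ → ℂ → ℂ := fun b w ↦ A.eval w - b * Q.eval w with hP_def
  set P' : ℂ → ℂ → ℂ := fun b w ↦ A.derivative.eval w - b * Q.derivative.eval w with hP'_def
  have hP (b w : ℂ) : (A - C b * Q).eval w = P b w := by simp [hP_def]
  have hP' (b w : ℂ) : (A - C b * Q).derivative.eval w = P' b w := by simp [hP'_def]
  have hP_ne {b w : ℂ} (hb : b ∈ U) (hw : w ∈ sphere c r) : P b w ≠ 0 :=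
    hP b w ▸ hne b hb w fun h ↦ sphere_disjoint_ball.le_bot ⟨hw, h⟩
  have hf_cont : ContinuousOn (fun p : ℂ × ℂ ↦ f p.2) (U ×ˢ sphere c r) :=
    hf.continuousOn.comp continuousOn_snd fun p hp ↦ sphere_subset_closedBall hp.2
  have hP_cont : Continuous fun p : ℂ × ℂ ↦ P p.1 p.2 := by simp only [hP_def]; fun_prop
  have hP'_cont : Continuous fun p : ℂ × ℂ ↦ P' p.1 p.2 := by simp only [hP'_def]; fun_prop
  have integral_diff : DifferentiableOn ℂ
      (fun b ↦ ∮ w in C(c, r), f w * (P' b w / P b w)) U := by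
    intro b₀ hb₀
    refine (hasDerivAt_circleIntegral (f := fun b w ↦ f w * (P' b w / P b w)) (f' := fun b w ↦ f w *
      ((-Q.derivative.eval w * P b w - P' b w * -Q.eval w) / P b w ^ 2)) hr hU hb₀
      (hf_cont.fun_mul (hP'_cont.continuousOn.div hP_cont.continuousOn fun p hp ↦ hP_ne hp.1 hp.2))
      (hf_cont.fun_mul (ContinuousOn.div (Continuous.continuousOn (by fun_prop))
        (hP_cont.pow 2).continuousOn fun p hp ↦ pow_ne_zero 2 (hP_ne hp.1 hp.2)))
      fun b hb w hw ↦ ?_).differentiableAt.differentiableWithinAt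
    have affine (A Q : ℂ[X]) : HasDerivAt (fun b ↦ A.eval w - b * Q.eval w) (-Q.eval w) b := by
      simpa using ((hasDerivAt_id b).mul_const (Q.eval w)).const_sub (A.eval w)
    exact ((affine _ _).div (affine A Q) (hP_ne hb hw)).const_mul (f w)
  refine (integral_diff.const_mul (2 * Real.pi * I)⁻¹).congr fun b hb ↦ ?_
  simp only [sum_map_roots_eq_circleIntegral hr hf (hne b hb), hP, hP']

/-! ### Generic multiplicities -/

theorem countable_setOf_eq_zero {f : ℂ → ℂ} {U : Set ℂ} (hU : IsOpen U) (hUc : IsPreconnected U)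
    (hf : DifferentiableOn ℂ f U) {z₀ : ℂ} (hz₀ : z₀ ∈ U) (hfz₀ : f z₀ ≠ 0) :
    {z ∈ U | f z = 0}.Countable := by
  have ne_zero_codiscrete : f ⁻¹' {0}ᶜ ∈ codiscreteWithin U :=
    (hf.analyticOnNhd hU).preimage_zero_mem_codiscreteWithin hfz₀ hz₀ ⟨⟨z₀, hz₀⟩, hUc⟩
  have zeros_eq : {z ∈ U | f z = 0} = (f ⁻¹' {0}ᶜ)ᶜ ∩ U := by
    ext z
    simp [and_comm]
  rw [zeros_eq]
  exact (HereditarilyLindelofSpace.isLindelof _).countable_of_isDiscrete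
    (isDiscrete_of_codiscreteWithin (by simpa using ne_zero_codiscrete))

theorem eval_iterate_derivative_rootMultiplicity_ne_zero {R : Type*} [CommRing R] [IsDomain R]
    [CharZero R] {p : R[X]} (hp : p ≠ 0) (t : R) :
    (derivative^[p.rootMultiplicity t] p).eval t ≠ 0 := by
  rw [eval_iterate_derivative_rootMultiplicity]
  exact smul_ne_zero (Nat.factorial_ne_zero _) (eval_divByMonic_pow_rootMultiplicity_ne_zero t hp)

/-- With `m` the multiplicity at `z₀`, the points of larger multiplicity are zeros of the `m`-th
derivative of the polynomial with roots `s z`, evaluated at `g z`. -/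
theorem countable_setOf_count_lt_count {U : Set ℂ} (hU : IsOpen U) (hUc : IsPreconnected U)
    {s : ℂ → Multiset ℂ} {n : ℕ} (hcard : ∀ z ∈ U, (s z).card = n)
    (hs : ∀ k, DifferentiableOn ℂ (fun z ↦ ((s z).map (· ^ k)).sum) U)
    {g : ℂ → ℂ} (hg : DifferentiableOn ℂ g U) {z₀ : ℂ} (hz₀ : z₀ ∈ U) :
    {z ∈ U | (s z₀).count (g z₀) < (s z).count (g z)}.Countable := by
  set χ : ℂ → ℂ[X] := fun z ↦ ((s z).map (X - C ·)).prod
  have count_eq (z x : ℂ) : (s z).count x = (χ z).rootMultiplicity x := by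
    rw [← count_roots, roots_multiset_prod_X_sub_C]
  have χ_ne_zero (z : ℂ) : χ z ≠ 0 := (monic_multiset_prod_of_monic _ _ fun x _ ↦
    monic_X_sub_C x).ne_zero
  have χ_natDegree (z : ℂ) (hz : z ∈ U) : (χ z).natDegree = n := by
    rw [natDegree_multiset_prod_X_sub_C_eq_card, hcard z hz]
  set m : ℕ := (s z₀).count (g z₀) with hm
  have deriv_differentiable :
      DifferentiableOn ℂ (fun z ↦ (derivative^[m] (χ z)).eval (g z)) U := by
    refine differentiableOn_eval_of_coeff (n := n) (fun z hz ↦ ?_) (fun k ↦ ?_) hg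
    · exact (natDegree_iterate_derivative _ _).trans ((Nat.sub_le _ _).trans (χ_natDegree z hz).le)
    · simp only [coeff_iterate_derivative]
      exact (differentiableOn_coeff_prod_X_sub_C hcard hs _).const_smul _
  have deriv_ne_zero : (derivative^[m] (χ z₀)).eval (g z₀) ≠ 0 := by
    rw [hm, count_eq]
    exact eval_iterate_derivative_rootMultiplicity_ne_zero (χ_ne_zero z₀) _
  refine (countable_setOf_eq_zero hU hUc deriv_differentiable hz₀ deriv_ne_zero).mono ?_
  rintro z ⟨hz, hlt⟩
  exact ⟨hz, isRoot_iterate_derivative_of_lt_rootMultiplicity (hlt.trans_eq (count_eq z (g z)))⟩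

/-! ### Fibers of a finite Blaschke product -/

theorem mem_uDisk {z : ℂ} : z ∈ uDisk ↔ ‖z‖ < 1 := mem_ball_zero_iff

theorem isOpen_uDisk : IsOpen uDisk := isOpen_ball

theorem norm_one_sub_conj_mul_sq_sub_norm_sub_sq (a w : ℂ) :
    ‖1 - (starRingEnd ℂ) a * w‖ ^ 2 - ‖a - w‖ ^ 2 = (1 - ‖a‖ ^ 2) * (1 - ‖w‖ ^ 2) := by
  simp only [← normSq_eq_norm_sq, normSq_apply, sub_re, sub_im, one_re, one_im, mul_re, mul_im,
    conj_re, conj_im]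
  ring

theorem norm_sub_lt_norm_one_sub_conj_mul {a w : ℂ} (ha : ‖a‖ < 1) (hw : ‖w‖ < 1) :
    ‖a - w‖ < ‖1 - (starRingEnd ℂ) a * w‖ := by
  have gap : 0 < (1 - ‖a‖ ^ 2) * (1 - ‖w‖ ^ 2) :=
    mul_pos (by nlinarith [norm_nonneg a]) (by nlinarith [norm_nonneg w])
  rw [← norm_one_sub_conj_mul_sq_sub_norm_sub_sq, sub_pos] at gap
  exact lt_of_pow_lt_pow_left₀ 2 (norm_nonneg _) gap

theorem norm_one_sub_conj_mul_le_norm_sub {a w : ℂ} (ha : ‖a‖ < 1) (hw : 1 ≤ ‖w‖) :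
    ‖1 - (starRingEnd ℂ) a * w‖ ≤ ‖a - w‖ := by
  have gap : (1 - ‖a‖ ^ 2) * (1 - ‖w‖ ^ 2) ≤ 0 :=
    mul_nonpos_of_nonneg_of_nonpos (by nlinarith [norm_nonneg a]) (by nlinarith)
  rw [← norm_one_sub_conj_mul_sq_sub_norm_sub_sq, sub_nonpos] at gap
  exact le_of_sq_le_sq gap (norm_nonneg _)

section Blaschke

variable {n : ℕ} {a : Fin n → ℂ}

/-- The numerator `A(w) = ∏ (a_j - w)` of the Blaschke product. -/
def numPoly (a : Fin n → ℂ) : ℂ[X] := ∏ j, (C (a j) - X)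

/-- The denominator `Q(w) = ∏ (1 - conj(a_j) w)` of the Blaschke product. -/
def denPoly (a : Fin n → ℂ) : ℂ[X] := ∏ j, (1 - C ((starRingEnd ℂ) (a j)) * X)

/-- The polynomial `A - b Q`, whose roots are the solutions of `B(w) = b` with multiplicity; at
`b = B(z)` its multiset of roots is by definition `fiberMS a z`. -/
def fiberPoly (a : Fin n → ℂ) (b : ℂ) : ℂ[X] := numPoly a - C b * denPoly a

theorem fiberMS_eq_roots_fiberPoly (z : ℂ) :
    fiberMS a z = (fiberPoly a (blaschke a z)).roots := rfl

theorem eval_numPoly (w : ℂ) : (numPoly a).eval w = ∏ j, (a j - w) := by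
  simp [numPoly, eval_prod]

theorem eval_denPoly (w : ℂ) :
    (denPoly a).eval w = ∏ j, (1 - (starRingEnd ℂ) (a j) * w) := by
  simp [denPoly, eval_prod]

theorem eval_fiberPoly (b w : ℂ) :
    (fiberPoly a b).eval w = (numPoly a).eval w - b * (denPoly a).eval w := by
  simp [fiberPoly]

theorem blaschke_eq_eval_div_eval (w : ℂ) :
    blaschke a w = (numPoly a).eval w / (denPoly a).eval w := by
  simp [blaschke, eval_numPoly, eval_denPoly]

theorem eval_denPoly_ne_zero (ha : ∀ j, a j ∈ uDisk) {w : ℂ} (hw : w ∈ uDisk) :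
    (denPoly a).eval w ≠ 0 := by
  rw [eval_denPoly]
  exact Finset.prod_ne_zero_iff.2 fun j _ ↦ norm_pos_iff.1 <| (norm_nonneg _).trans_lt <|
    norm_sub_lt_norm_one_sub_conj_mul (mem_uDisk.1 (ha j)) (mem_uDisk.1 hw)

theorem blaschke_mem_uDisk (hn : n ≠ 0) (ha : ∀ j, a j ∈ uDisk) {w : ℂ} (hw : w ∈ uDisk) :
    blaschke a w ∈ uDisk := by
  have : NeZero n := ⟨hn⟩
  have factor_lt_one (j : Fin n) : ‖(a j - w) / (1 - (starRingEnd ℂ) (a j) * w)‖ < 1 := by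
    have h := norm_sub_lt_norm_one_sub_conj_mul (mem_uDisk.1 (ha j)) (mem_uDisk.1 hw)
    rwa [norm_div, div_lt_one ((norm_nonneg _).trans_lt h)]
  rw [mem_uDisk, blaschke, ← Finset.mul_prod_erase _ _ (Finset.mem_univ 0), norm_mul, norm_prod]
  exact mul_lt_one_of_nonneg_of_lt_one_left (norm_nonneg _) (factor_lt_one 0)
    (Finset.prod_le_one (fun _ _ ↦ norm_nonneg _) fun j _ ↦ (factor_lt_one j).le)

theorem differentiableOn_blaschke (ha : ∀ j, a j ∈ uDisk) :
    DifferentiableOn ℂ (blaschke a) uDisk :=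
  ((numPoly a).differentiable.differentiableOn.fun_div (denPoly a).differentiable.differentiableOn
    fun _ hw ↦ eval_denPoly_ne_zero ha hw).congr fun w _ ↦ blaschke_eq_eval_div_eval w

theorem norm_eval_denPoly_le_norm_eval_numPoly (ha : ∀ j, a j ∈ uDisk) {w : ℂ} (hw : 1 ≤ ‖w‖) :
    ‖(denPoly a).eval w‖ ≤ ‖(numPoly a).eval w‖ := by
  simp only [eval_denPoly, eval_numPoly, norm_prod]
  exact Finset.prod_le_prod (fun _ _ ↦ norm_nonneg _) fun j _ ↦
    norm_one_sub_conj_mul_le_norm_sub (mem_uDisk.1 (ha j)) hw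

theorem eval_numPoly_ne_zero (ha : ∀ j, a j ∈ uDisk) {w : ℂ} (hw : 1 ≤ ‖w‖) :
    (numPoly a).eval w ≠ 0 := by
  rw [eval_numPoly]
  refine Finset.prod_ne_zero_iff.2 fun j _ hj ↦ hw.not_gt ?_
  exact sub_eq_zero.1 hj ▸ mem_uDisk.1 (ha j)

theorem exists_ball_forall_eval_fiberPoly_ne_zero (ha : ∀ j, a j ∈ uDisk) {ρ : ℝ} (hρ : ρ < 1) :
    ∃ r ∈ Ioo (0 : ℝ) 1, ∀ b ∈ ball (0 : ℂ) ρ, ∀ w ∉ ball 0 r, (fiberPoly a b).eval w ≠ 0 := by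
  set K : Set ℂ := {w | ‖(numPoly a).eval w‖ ≤ ρ * ‖(denPoly a).eval w‖}
  have K_closed : IsClosed K := isClosed_le (by fun_prop) (by fun_prop)
  have K_subset : K ⊆ ball 0 1 := by
    refine fun w hw ↦ mem_ball_zero_iff.2 (lt_of_not_ge fun h1w ↦ ?_)
    have num_pos := norm_pos_iff.2 (eval_numPoly_ne_zero ha h1w)
    have den_le := norm_eval_denPoly_le_norm_eval_numPoly ha h1w
    have num_le : ‖(numPoly a).eval w‖ ≤ ρ * ‖(denPoly a).eval w‖ := hw
    have den_pos : 0 < ‖(denPoly a).eval w‖ :=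
      (norm_nonneg _).lt_of_ne' fun h ↦ by simp only [h, mul_zero] at num_le; linarith
    nlinarith
  obtain ⟨r, hr, hKr⟩ := exists_pos_lt_subset_ball one_pos K_closed K_subset
  refine ⟨r, hr, fun b hb w hw hroot ↦ hw (hKr ?_)⟩
  rw [eval_fiberPoly, sub_eq_zero] at hroot
  change ‖(numPoly a).eval w‖ ≤ ρ * ‖(denPoly a).eval w‖
  rw [hroot, norm_mul]
  exact mul_le_mul_of_nonneg_right (mem_ball_zero_iff.1 hb).le (norm_nonneg _)

theorem mem_uDisk_of_eval_fiberPoly_eq_zero (ha : ∀ j, a j ∈ uDisk) {b w : ℂ} (hb : b ∈ uDisk)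
    (hw : (fiberPoly a b).eval w = 0) : w ∈ uDisk := by
  obtain ⟨ρ, hbρ, hρ⟩ := exists_between (mem_uDisk.1 hb)
  obtain ⟨r, hr, hne⟩ := exists_ball_forall_eval_fiberPoly_ne_zero ha hρ
  exact ball_subset_ball hr.2.le
    (by_contra fun h ↦ hne b (mem_ball_zero_iff.2 hbρ) w h hw)

theorem coeff_fiberPoly (b : ℂ) :
    (fiberPoly a b).coeff n = (-1) ^ n * (1 - b * ∏ j, (starRingEnd ℂ) (a j)) := by
  have num_coeff : (numPoly a).coeff n = (-1) ^ n := by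
    have h := coeff_prod_of_natDegree_le (fun j ↦ C (a j) - X) 1
      (fun j _ ↦ by compute_degree) (s := Finset.univ)
    simpa [numPoly, coeff_C] using h
  have den_coeff : (denPoly a).coeff n = (-1) ^ n * ∏ j, (starRingEnd ℂ) (a j) := by
    have h := coeff_prod_of_natDegree_le (fun j ↦ 1 - C ((starRingEnd ℂ) (a j)) * X) 1
      (fun j _ ↦ by compute_degree) (s := Finset.univ)
    simpa [denPoly, coeff_one, Finset.prod_neg] using h
  rw [fiberPoly, coeff_sub, coeff_C_mul, num_coeff, den_coeff]
  ring

theorem natDegree_fiberPoly_le (b : ℂ) : (fiberPoly a b).natDegree ≤ n := by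
  have natDegree_prod_le_card (p : Fin n → ℂ[X]) (hp : ∀ j, (p j).natDegree ≤ 1) :
      (∏ j, p j).natDegree ≤ n :=
    (natDegree_prod_le _ _).trans ((Finset.sum_le_card_nsmul _ _ 1 fun j _ ↦ hp j).trans (by simp))
  refine (natDegree_sub_le_of_le (natDegree_prod_le_card _ fun j ↦ by compute_degree)
    ((natDegree_C_mul_le _ _).trans (natDegree_prod_le_card _ fun j ↦ by compute_degree))).trans ?_
  exact (max_self n).le

theorem natDegree_fiberPoly (ha : ∀ j, a j ∈ uDisk) {b : ℂ} (hb : b ∈ uDisk) :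
    (fiberPoly a b).natDegree = n := by
  refine natDegree_eq_of_le_of_coeff_ne_zero (natDegree_fiberPoly_le b) ?_
  have norm_lt_one : ‖b * ∏ j, (starRingEnd ℂ) (a j)‖ < 1 := by
    rw [norm_mul, norm_prod]
    refine mul_lt_one_of_nonneg_of_lt_one_left (norm_nonneg _) (mem_uDisk.1 hb)
      (Finset.prod_le_one (fun _ _ ↦ norm_nonneg _) fun j _ ↦ ?_)
    simpa using (mem_uDisk.1 (ha j)).le
  rw [coeff_fiberPoly]
  refine mul_ne_zero (pow_ne_zero n (neg_ne_zero.2 one_ne_zero)) (sub_ne_zero.2 fun h ↦ ?_)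
  exact norm_lt_one.ne (h ▸ norm_one)

theorem mem_roots_fiberPoly (hn : n ≠ 0) (ha : ∀ j, a j ∈ uDisk) {b w : ℂ} (hb : b ∈ uDisk) :
    w ∈ (fiberPoly a b).roots ↔ w ∈ uDisk ∧ blaschke a w = b := by
  have ne_zero : fiberPoly a b ≠ 0 :=
    ne_zero_of_natDegree_gt ((natDegree_fiberPoly ha hb).symm ▸ Nat.pos_of_ne_zero hn)
  have eval_eq_zero_iff (hw : w ∈ uDisk) : (fiberPoly a b).eval w = 0 ↔ blaschke a w = b := by
    rw [eval_fiberPoly, blaschke_eq_eval_div_eval, div_eq_iff (eval_denPoly_ne_zero ha hw),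
      sub_eq_zero]
  rw [mem_roots ne_zero, IsRoot.def]
  exact ⟨fun h ↦ have hw := mem_uDisk_of_eval_fiberPoly_eq_zero ha hb h
    ⟨hw, (eval_eq_zero_iff hw).1 h⟩, fun h ↦ (eval_eq_zero_iff h.1).2 h.2⟩

theorem card_roots_fiberPoly (ha : ∀ j, a j ∈ uDisk) {b : ℂ} (hb : b ∈ uDisk) :
    (fiberPoly a b).roots.card = n := by
  rw [IsAlgClosed.card_roots_eq_natDegree, natDegree_fiberPoly ha hb]

theorem card_fiberMS (hn : n ≠ 0) (ha : ∀ j, a j ∈ uDisk) {z : ℂ} (hz : z ∈ uDisk) :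
    (fiberMS a z).card = n :=
  card_roots_fiberPoly ha (blaschke_mem_uDisk hn ha hz)

theorem mem_fiberMS (hn : n ≠ 0) (ha : ∀ j, a j ∈ uDisk) {z w : ℂ} (hz : z ∈ uDisk) :
    w ∈ fiberMS a z ↔ w ∈ uDisk ∧ blaschke a w = blaschke a z :=
  mem_roots_fiberPoly hn ha (blaschke_mem_uDisk hn ha hz)

theorem surjOn_blaschke (hn : n ≠ 0) (ha : ∀ j, a j ∈ uDisk) :
    SurjOn (blaschke a) uDisk uDisk := by
  intro b hb
  obtain ⟨w, hw⟩ : ∃ w, w ∈ (fiberPoly a b).roots :=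
    Multiset.card_pos_iff_exists_mem.1
      ((card_roots_fiberPoly ha hb).symm ▸ Nat.pos_of_ne_zero hn)
  exact ⟨w, (mem_roots_fiberPoly hn ha hb).1 hw⟩

theorem differentiableOn_sum_map_roots_fiberPoly (ha : ∀ j, a j ∈ uDisk) {f : ℂ → ℂ}
    (hf : DifferentiableOn ℂ f uDisk) :
    DifferentiableOn ℂ (fun b ↦ ((fiberPoly a b).roots.map f).sum) uDisk := by
  intro b hb
  obtain ⟨ρ, hbρ, hρ⟩ := exists_between (mem_uDisk.1 hb)
  obtain ⟨r, hr, hne⟩ := exists_ball_forall_eval_fiberPoly_ne_zero ha hρ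
  have hdiff := differentiableOn_sum_map_roots_pencil hr.1.le isOpen_ball
    (hf.mono (closedBall_subset_ball hr.2)) hne
  exact (hdiff.differentiableAt
    (isOpen_ball.mem_nhds (mem_ball_zero_iff.2 hbρ))).differentiableWithinAt

theorem memHinf_of_comp_blaschke (hn : n ≠ 0) (ha : ∀ j, a j ∈ uDisk) {g g₁ : ℂ → ℂ}
    (hg : MemHinf g) (hg₁ : DifferentiableOn ℂ g₁ uDisk)
    (h : ∀ z ∈ uDisk, g z = g₁ (blaschke a z)) : MemHinf g₁ := by
  obtain ⟨M, hM⟩ := hg.2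
  refine ⟨hg₁, M, fun b hb ↦ ?_⟩
  obtain ⟨z, hz, rfl⟩ := surjOn_blaschke hn ha hb
  exact h z hz ▸ hM z hz

/-! ### The multiplicity of `g` along the fibers -/

/-- The number of points `w`, counted with multiplicity, of the fiber of `B` through `z` such that
`g w = g z`. -/
def fiberMult (a : Fin n → ℂ) (g : ℂ → ℂ) (z : ℂ) : ℕ :=
  ((fiberMS a z).map g).count (g z)

theorem countable_setOf_fiberMult_lt (hn : n ≠ 0) (ha : ∀ j, a j ∈ uDisk) {g : ℂ → ℂ}
    (hg : DifferentiableOn ℂ g uDisk) {z₀ : ℂ} (hz₀ : z₀ ∈ uDisk) :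
    {z ∈ uDisk | fiberMult a g z₀ < fiberMult a g z}.Countable := by
  refine countable_setOf_count_lt_count isOpen_uDisk (convex_ball 0 1).isPreconnected
    (s := fun z ↦ (fiberMS a z).map g) (n := n)
    (fun z hz ↦ by rw [Multiset.card_map, card_fiberMS hn ha hz]) (fun k ↦ ?_) hg hz₀
  simp only [Multiset.map_map, fiberMS_eq_roots_fiberPoly]
  exact (differentiableOn_sum_map_roots_fiberPoly ha (hg.pow k)).comp
    (differentiableOn_blaschke ha) fun z hz ↦ blaschke_mem_uDisk hn ha hz

theorem exists_fiberMult_dvd_and_forall_le (hn : n ≠ 0) (ha : ∀ j, a j ∈ uDisk) {g : ℂ → ℂ}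
    (hg : DifferentiableOn ℂ g uDisk) :
    ∃ z₀ ∈ uDisk, fiberMult a g z₀ ∣ n ∧ ∀ z ∈ uDisk, fiberMult a g z₀ ≤ fiberMult a g z := by
  have disk_nonempty : uDisk.Nonempty := nonempty_ball.2 one_pos
  obtain ⟨z₀, hz₀, hmin⟩ : ∃ z₀ ∈ uDisk, ∀ z ∈ uDisk, fiberMult a g z₀ ≤ fiberMult a g z :=
    ⟨_, Function.argminOn_mem (fiberMult a g) uDisk disk_nonempty,
      fun z hz ↦ Function.argminOn_le (fiberMult a g) uDisk hz⟩
  refine ⟨z₀, hz₀, ?_, hmin⟩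
  obtain ⟨b, hb, hb_generic⟩ := ((countable_setOf_fiberMult_lt hn ha hg hz₀).image
    (blaschke a)).dense_compl ℂ |>.inter_open_nonempty uDisk isOpen_uDisk disk_nonempty
  obtain ⟨z, hz, rfl⟩ := surjOn_blaschke hn ha hb
  have fiberMult_eq (w : ℂ) (hw : w ∈ fiberMS a z) :
      ((fiberMS a z).map g).count (g w) = fiberMult a g z₀ := by
    obtain ⟨hw, hwz⟩ := (mem_fiberMS hn ha hz).1 hw
    have fiber_eq : fiberMS a z = fiberMS a w := by
      simp only [fiberMS_eq_roots_fiberPoly, hwz]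
    rw [fiber_eq]
    exact le_antisymm (not_lt.1 fun hlt ↦ hb_generic ⟨w, ⟨hw, hlt⟩, hwz⟩) (hmin w hw)
  have dvd_card := dvd_card_of_forall_count_eq (Multiset.forall_mem_map_iff.2 fiberMult_eq)
  rwa [Multiset.card_map, card_fiberMS hn ha hz] at dvd_card

theorem one_lt_fiberMult (hn : n ≠ 0) (ha : ∀ j, a j ∈ uDisk) {g : ℂ → ℂ} {z : ℂ}
    (hz : z ∈ uDisk) (hD : calD a g z = 0) : 1 < fiberMult a g z := by
  obtain ⟨w, hw, hgw⟩ := Multiset.mem_map.1 (Multiset.prod_eq_zero_iff.1 hD)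
  have z_mem : z ∈ fiberMS a z := (mem_fiberMS hn ha hz).2 ⟨hz, rfl⟩
  have gz_mem : g z ∈ ((fiberMS a z).erase z).map g :=
    sub_eq_zero.1 hgw ▸ Multiset.mem_map_of_mem g hw
  rw [fiberMult, ← Multiset.cons_erase z_mem, Multiset.map_cons, Multiset.count_cons_self]
  exact Nat.lt_add_of_pos_left (Multiset.count_pos.2 gz_mem)

theorem eq_sum_map_roots_of_fiberMult_eq (hn : n ≠ 0) (ha : ∀ j, a j ∈ uDisk) {g : ℂ → ℂ} {z : ℂ}
    (hz : z ∈ uDisk) (h : fiberMult a g z = n) :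
    g z = (n : ℂ)⁻¹ * ((fiberPoly a (blaschke a z)).roots.map g).sum := by
  have card_eq : ((fiberMS a z).map g).card = n := by
    rw [Multiset.card_map, card_fiberMS hn ha hz]
  have constant : (fiberMS a z).map g = Multiset.replicate n (g z) :=
    Multiset.eq_replicate.2 ⟨card_eq, fun y hy ↦
      (Multiset.count_eq_card.1 (h.trans card_eq.symm) y hy).symm⟩
  rw [← fiberMS_eq_roots_fiberPoly, constant, Multiset.sum_replicate, nsmul_eq_mul,
    inv_mul_cancel_left₀ (Nat.cast_ne_zero.2 hn)]

end Blaschke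

theorem stmt14_general {n : ℕ} (hn : n.Prime) {a : Fin n → ℂ} (ha : ∀ j, a j ∈ uDisk) {g : ℂ → ℂ}
    (hg : DifferentiableOn ℂ g uDisk) (hD : ∀ z ∈ uDisk, calD a g z = 0) :
    ∃ g₁ : ℂ → ℂ, DifferentiableOn ℂ g₁ uDisk ∧ ∀ z ∈ uDisk, g z = g₁ (blaschke a z) := by
  obtain ⟨z₀, hz₀, hdvd, hmin⟩ := exists_fiberMult_dvd_and_forall_le hn.ne_zero ha hg
  have min_eq : fiberMult a g z₀ = n :=
    (hn.eq_one_or_self_of_dvd _ hdvd).resolve_left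
      (one_lt_fiberMult hn.ne_zero ha hz₀ (hD z₀ hz₀)).ne'
  have le_degree (z : ℂ) (hz : z ∈ uDisk) : fiberMult a g z ≤ n :=
    (Multiset.count_le_card _ _).trans_eq
      ((Multiset.card_map g _).trans (card_fiberMS hn.ne_zero ha hz))
  exact ⟨_, (differentiableOn_sum_map_roots_fiberPoly ha hg).const_mul (n : ℂ)⁻¹, fun z hz ↦
    eq_sum_map_roots_of_fiberMult_eq hn.ne_zero ha hz
      (le_antisymm (le_degree z hz) (min_eq.ge.trans (hmin z hz)))⟩

/-- If the degree `n` of `B` is prime, `g ∈ H^∞`, and `Γ(g)` vanishes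
identically on `𝔻`, then `g = g₁ ∘ B` for some bounded holomorphic `g₁` on `𝔻`. -/
theorem stmt14 {n : ℕ} (hn : n.Prime) (a : Fin n → ℂ) (ha : ∀ j, a j ∈ uDisk)
    (ha0 : a ⟨0, Nat.pos_of_ne_zero (by simpa using hn.pos.ne')⟩ = 0)
    (g Γg : ℂ → ℂ) (hg : MemHinf g) (hΓg : IsGamma a g Γg)
    (hvan : ∀ z ∈ uDisk, Γg z = 0) :
    ∃ g₁ : ℂ → ℂ, MemHinf g₁ ∧ ∀ z ∈ uDisk, g z = g₁ (blaschke a z) := by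
  have hD (z : ℂ) (hz : z ∈ uDisk) : calD a g z = 0 := by
    rw [← hΓg.2 z hz, hvan z hz, zero_mul]
  obtain ⟨g₁, hg₁, hcomp⟩ := stmt14_general hn ha hg.1 hD
  exact ⟨g₁, memHinf_of_comp_blaschke hn.ne_zero ha hg hg₁ hcomp, hcomp⟩
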